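/- In the autonomous case (b(t) ≡ b > 0, ω(t) ≡ ω ≥ 0) with ω < π², the global attractor 𝒜 of the multivalued semiflow G generated by problem (InclAut) is compact in V^{2r} for every 0 ≤ r < 1. -/

import Mathlib

open MeasureTheory Set

noncomputable section

/-- Lebesgue measure restricted to the spatial interval `(0,1)`. -/
def μ01 : Measure ℝ := volume.restrict (Ioo (0:ℝ) 1)

/-- `H = L²(0,1)`. -/
abbrev Hsp : Type := Lp ℝ 2 μ01

/-- The Heaviside multifunction. -/
def heaviside (s : ℝ) : Set ℝ :=
  if s < 0 then {-1} else if s = 0 then Icc (-1) 1 else {1}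

/-- Condition (Cond1). -/
structure Cond1 (b ω : ℝ → ℝ) (b0 b1 ω0 ω1 : ℝ) : Prop where
  contb : Continuous b
  contω : Continuous ω
  b0pos : 0 < b0
  blb : ∀ t, b0 ≤ b t
  bub : ∀ t, b t ≤ b1
  ω0nonneg : 0 ≤ ω0
  ωlb : ∀ t, ω0 ≤ ω t
  ωub : ∀ t, ω t ≤ ω1

/-- `v ∈ H²(0,1) ∩ H¹₀(0,1)` with (weak) second derivative `w ∈ L²(0,1)`:
`v` has a representative that is continuous on `[0,1]`, vanishes at the boundary,
is differentiable on `(0,1)` and whose derivative is an antiderivative of `w`. -/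
def InDomainA (v w : Hsp) : Prop :=
  ∃ vt : ℝ → ℝ, ContinuousOn vt (Icc 0 1) ∧ vt 0 = 0 ∧ vt 1 = 0 ∧
    (∀ᵐ x ∂μ01, vt x = v x) ∧
    ∃ g : ℝ → ℝ,
      (∀ x ∈ Ioo (0:ℝ) 1, HasDerivAt vt (g x) x) ∧
      ∀ x ∈ Ioo (0:ℝ) 1, ∀ y ∈ Ioo (0:ℝ) 1, g x - g y = ∫ z in y..x, w z

/-- A strong solution of the inclusion on `[τ,∞)`, with explicit data:
`r` is the `L²`-selection, `u'` the time derivative, `uxx` the second spatial derivative. -/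
structure IsStrongSolutionWith (b ω : ℝ → ℝ) (τ : ℝ) (u r u' uxx : ℝ → Hsp) : Prop where
  cont : ContinuousOn u (Ici τ)
  rmem : ∀ T, τ < T → MemLp r 2 (volume.restrict (Ioo τ T))
  sel : ∀ᵐ t ∂(volume.restrict (Ioi τ)), ∀ᵐ x ∂μ01,
      ∃ h ∈ heaviside (u t x), r t x = b t * h + ω t * u t x
  dom : ∀ᵐ t ∂(volume.restrict (Ioi τ)), InDomainA (u t) (uxx t)
  eq : ∀ᵐ t ∂(volume.restrict (Ioi τ)), u' t = r t + uxx t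
  fund : ∀ T1 T2 : ℝ, τ < T1 → T1 < T2 →
      IntervalIntegrable u' volume T1 T2 ∧
      ∀ t ∈ Icc T1 T2, u t = u T1 + ∫ s in T1..t, u' s

/-- A strong solution of the inclusion on `[τ,∞)`. -/
def IsStrongSolution (b ω : ℝ → ℝ) (τ : ℝ) (u : ℝ → Hsp) : Prop :=
  ∃ r u' uxx, IsStrongSolutionWith b ω τ u r u' uxx

/-- The solution is non-negative on `[τ,∞)`. -/
def NonnegOn (u : ℝ → Hsp) (τ : ℝ) : Prop :=
  ∀ t, τ ≤ t → ∀ᵐ x ∂μ01, 0 ≤ u t x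

/-- `v` is positive: it has a continuous representative on `[0,1]`
which is strictly positive on `(0,1)`. -/
def IsPositive (v : Hsp) : Prop :=
  ∃ vt : ℝ → ℝ, ContinuousOn vt (Icc 0 1) ∧ (∀ᵐ x ∂μ01, vt x = v x) ∧
    ∀ x ∈ Ioo (0:ℝ) 1, 0 < vt x


/-- Fourier sine coefficient of `v` (eigenfunctions of `A = −d²/dx²` on `(0,1)`
with Dirichlet boundary conditions are `sin((n+1)πx)`, `n ∈ ℕ`). -/
def sinCoeff (v : Hsp) (n : ℕ) : ℝ :=
  ∫ x in (0:ℝ)..1, v x * Real.sin (((n : ℝ) + 1) * Real.pi * x)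

/-- `v ∈ V^{2r} = D(A^r)`, characterized through the eigenfunction expansion. -/
def MemV2r (r : ℝ) (v : Hsp) : Prop :=
  Summable (fun n : ℕ => ((((n : ℝ) + 1) * Real.pi) ^ (4 * r)) * (sinCoeff v n) ^ 2)

/-- The square of the `V^{2r} = D(A^r)` distance between `v` and `w`. -/
def V2rDistSq (r : ℝ) (v w : Hsp) : ENNReal :=
  ∑' n : ℕ, ENNReal.ofReal (((((n : ℝ) + 1) * Real.pi) ^ (4 * r)) * (sinCoeff (v - w) n) ^ 2)

/-- The multivalued semiflow of the autonomous problem applied to a set: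
`G(t,S) = {u(t) : u ∈ 𝒟(u₀), u₀ ∈ S}`. -/
def autG (b ω : ℝ) (t : ℝ) (S : Set Hsp) : Set Hsp :=
  {y | ∃ u : ℝ → Hsp, u 0 ∈ S ∧
        IsStrongSolution (fun _ => b) (fun _ => ω) 0 u ∧ y = u t}

/-- `𝒜` is the global attractor of the autonomous multivalued semiflow `G`:
compact in `H`, strictly invariant, and attracting every bounded set. -/
structure IsGlobalAttractor (b ω : ℝ) (𝒜 : Set Hsp) : Prop where
  compact : IsCompact 𝒜
  invariant : ∀ t : ℝ, 0 ≤ t → autG b ω t 𝒜 = 𝒜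
  attracting : ∀ B : Set Hsp, Bornology.IsBounded B → ∀ ε > (0:ℝ),
    ∃ T : ℝ, ∀ t, T ≤ t → ∀ y ∈ autG b ω t B, ∃ a ∈ 𝒜, ‖y - a‖ < ε

/-!
Negative invariance writes every `v ∈ 𝒜` as `v = u 2` for a strong solution `u` that stays in the
bounded set `𝒜`, so the selection `r` on the right-hand side is bounded in `L²(0,1)` as well. Each
sine coefficient `c` of `u` solves the scalar equation `c' = ρ − λ c`, where `ρ` is the coefficient
of `r` and `λ` the Dirichlet eigenvalue. Weighting its energy estimate by `λ^(2q)` produces the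
kernel `λ^(2q−1) exp (−λ s) ≤ ((2q−1)/s)^(2q−1)`, uniform in `λ` and integrable at `s = 0` as long
as `q < 1`; summing over the modes with Bessel's inequality bounds `𝒜` in `V^{2q}`. Hölder's
inequality interpolates the `V^{2r}` norm, `0 ≤ r < q`, between the norms of `H` and `V^{2q}`, so a
subsequence converging in `H` converges in `V^{2r}` too.
-/

open Filter Topology
open scoped ENNReal NNReal

section RealAnalysis

lemma rpow_mul_exp_neg_mul_le {x s p : ℝ} (hx : 0 ≤ x) (hs : 0 < s) (hp : 0 ≤ p) :
    x ^ p * Real.exp (-(x * s)) ≤ (p / s) ^ p := by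
  rcases hp.eq_or_lt with rfl | hp
  · simpa using mul_nonneg hx hs.le
  have hexp : (x * s / p) ^ p ≤ Real.exp (x * s) :=
    calc (x * s / p) ^ p ≤ Real.exp (x * s / p) ^ p := by
          gcongr
          linarith [Real.add_one_le_exp (x * s / p)]
      _ = Real.exp (x * s) := by rw [← Real.exp_mul, div_mul_cancel₀ _ hp.ne']
  calc x ^ p * Real.exp (-(x * s))
      = (p / s) ^ p * ((x * s / p) ^ p * Real.exp (-(x * s))) := by
        rw [← mul_assoc, ← Real.mul_rpow (by positivity) (by positivity)]
        congr 2
        field_simp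
    _ ≤ (p / s) ^ p * (Real.exp (x * s) * Real.exp (-(x * s))) := by gcongr
    _ = (p / s) ^ p := by rw [← Real.exp_add, add_neg_cancel, Real.exp_zero, mul_one]

lemma lintegral_div_sub_rpow_ne_top {c p : ℝ} (hc : 0 ≤ c) (hp : p < 1) (a b : ℝ) :
    ∫⁻ s in Ioo a b, ENNReal.ofReal ((c / (b - s)) ^ p) ≠ ∞ := by
  rcases le_or_gt b a with hab | hab
  · simp [Ioo_eq_empty hab.not_gt]
  have hint : IntervalIntegrable (fun s => c ^ p * (b - s) ^ (-p)) volume a b := by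
    have h : IntervalIntegrable (fun s : ℝ => s ^ (-p)) volume (b - a) (b - b) :=
      intervalIntegral.intervalIntegrable_rpow' (by linarith)
    simpa using (h.comp_sub_left b).const_mul (c ^ p)
  rw [intervalIntegrable_iff_integrableOn_Ioo_of_le hab.le] at hint
  have hcongr : ∀ s ∈ Ioo a b, (c / (b - s)) ^ p = c ^ p * (b - s) ^ (-p) := fun s hs => by
    have hs' : 0 ≤ b - s := by linarith [hs.2]
    rw [Real.div_rpow hc hs', Real.rpow_neg hs', div_eq_mul_inv]
  exact ((integrableOn_congr_fun hcongr measurableSet_Ioo).2 hint).lintegral_lt_top.ne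

lemma ofReal_integral_le_lintegral_ofReal {α : Type*} [MeasurableSpace α] (μ : Measure α)
    (f : α → ℝ) : ENNReal.ofReal (∫ x, f x ∂μ) ≤ ∫⁻ x, ENNReal.ofReal (f x) ∂μ := by
  by_cases hf : Integrable f μ
  · rw [integral_eq_lintegral_pos_part_sub_lintegral_neg_part hf]
    exact (ENNReal.ofReal_le_ofReal (sub_le_self _ ENNReal.toReal_nonneg)).trans
      ENNReal.ofReal_toReal_le
  · simp [integral_undef hf]

/- Young's inequality `2 c ρ ≤ l c² + l⁻¹ ρ²` absorbs half of the damping, so that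
`(exp (l t) c²)' ≤ exp (l t) l⁻¹ ρ²`. -/
lemma sq_le_of_ae_hasDerivAt_sub_mul {c ρ : ℝ → ℝ} {a b l : ℝ} (hab : a ≤ b) (hl : 0 < l)
    (hc : AbsolutelyContinuousOnInterval c a b)
    (hderiv : ∀ᵐ t, t ∈ Ioo a b → HasDerivAt c (ρ t - l * c t) t) :
    ENNReal.ofReal (c b ^ 2) ≤ ENNReal.ofReal (Real.exp (-(l * (b - a))) * c a ^ 2) +
      ∫⁻ t in Ioo a b, ENNReal.ofReal (Real.exp (-(l * (b - t))) * (l⁻¹ * ρ t ^ 2)) := by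
  set E : ℝ → ℝ := fun t => Real.exp (-(l * (b - t))) with hE
  have hE_deriv (t : ℝ) : HasDerivAt E (E t * l) t := by
    simpa [hE] using (((hasDerivAt_id t).const_sub b).const_mul l).neg.exp
  have hEac : AbsolutelyContinuousOnInterval E a b :=
    ContDiffOn.absolutelyContinuousOnInterval (by fun_prop)
  have hFTC := (hEac.mul (hc.mul hc)).integral_deriv_eq_sub
  have hle : ∀ᵐ t ∂volume.restrict (Ioo a b),
      deriv (E * (c * c)) t ≤ E t * (l⁻¹ * ρ t ^ 2) := by
    filter_upwards [(ae_restrict_iff' measurableSet_Ioo).2 hderiv] with t ht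
    rw [((hE_deriv t).mul (ht.mul ht)).deriv]
    have hyoung : l * c t ^ 2 + 2 * c t * (ρ t - l * c t) ≤ l⁻¹ * ρ t ^ 2 := by
      have : l⁻¹ * ρ t ^ 2 - (l * c t ^ 2 + 2 * c t * (ρ t - l * c t)) =
          l⁻¹ * (ρ t - l * c t) ^ 2 := by field_simp; ring
      have : 0 ≤ l⁻¹ * (ρ t - l * c t) ^ 2 := by positivity
      linarith
    calc E t * l * (c * c) t + E t * ((ρ t - l * c t) * c t + c t * (ρ t - l * c t))
        = E t * (l * c t ^ 2 + 2 * c t * (ρ t - l * c t)) := by rw [Pi.mul_apply]; ring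
      _ ≤ E t * (l⁻¹ * ρ t ^ 2) := by gcongr
  have hb : c b ^ 2 = E a * c a ^ 2 + ∫ t in Ioo a b, deriv (E * (c * c)) t := by
    rw [← integral_Ioc_eq_integral_Ioo, ← intervalIntegral.integral_of_le hab, hFTC]
    simp only [hE, Pi.mul_apply, sub_self, mul_zero, neg_zero, Real.exp_zero]
    ring
  rw [hb]
  refine ENNReal.ofReal_add_le.trans (add_le_add_right ?_ _)
  exact (ofReal_integral_le_lintegral_ofReal _ _).trans
    (lintegral_mono_ae (hle.mono fun t ht => ENNReal.ofReal_le_ofReal ht))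

lemma integral_cos_int_mul_pi (k : ℤ) :
    ∫ x in (0 : ℝ)..1, Real.cos (k * Real.pi * x) = if k = 0 then 1 else 0 := by
  split_ifs with hk
  · simp [hk]
  · have hkπ : (k : ℝ) * Real.pi ≠ 0 := mul_ne_zero (mod_cast hk) Real.pi_ne_zero
    rw [intervalIntegral.integral_comp_mul_left Real.cos hkπ]
    simp [Real.sin_int_mul_pi]

lemma integral_sin_mul_sin (m n : ℕ) :
    ∫ x in (0 : ℝ)..1,
      Real.sin (((m : ℝ) + 1) * Real.pi * x) * Real.sin (((n : ℝ) + 1) * Real.pi * x) =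
        if m = n then 1 / 2 else 0 := by
  have hprod (x : ℝ) :
      Real.sin (((m : ℝ) + 1) * Real.pi * x) * Real.sin (((n : ℝ) + 1) * Real.pi * x) =
        1 / 2 * (Real.cos (((m - n : ℤ) : ℝ) * Real.pi * x) -
          Real.cos (((m + n + 2 : ℤ) : ℝ) * Real.pi * x)) := by
    have hsub : ((m - n : ℤ) : ℝ) * Real.pi * x =
        ((m : ℝ) + 1) * Real.pi * x - ((n : ℝ) + 1) * Real.pi * x := by push_cast; ring
    have hadd : ((m + n + 2 : ℤ) : ℝ) * Real.pi * x =
        ((m : ℝ) + 1) * Real.pi * x + ((n : ℝ) + 1) * Real.pi * x := by push_cast; ring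
    rw [hsub, hadd, Real.cos_sub, Real.cos_add]
    ring
  have hsum : (m + n + 2 : ℤ) ≠ 0 := by positivity
  simp_rw [hprod]
  rw [intervalIntegral.integral_const_mul, intervalIntegral.integral_sub
    (Continuous.intervalIntegrable (by fun_prop) _ _)
    (Continuous.intervalIntegrable (by fun_prop) _ _),
    integral_cos_int_mul_pi, integral_cos_int_mul_pi, if_neg hsum]
  simp only [sub_eq_zero, Nat.cast_inj]
  split_ifs <;> norm_num

end RealAnalysis

section DirichletLaplacian

instance : IsProbabilityMeasure μ01 := ⟨by simp [μ01]⟩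

lemma intervalIntegral_zero_one_eq_integral_μ01 (f : ℝ → ℝ) :
    ∫ x in (0 : ℝ)..1, f x = ∫ x, f x ∂μ01 := by
  rw [intervalIntegral.integral_of_le zero_le_one, integral_Ioc_eq_integral_Ioo, μ01]

/-- The Dirichlet eigenvalue `λₙ = ((n + 1) π)²` of `−d²/dx²` on `(0,1)`, with eigenfunction
`sin ((n + 1) π x)`; indices start at `0`, as in `sinCoeff`. -/
def dirichletEigenvalue (n : ℕ) : ℝ := (((n : ℝ) + 1) * Real.pi) ^ 2

lemma one_le_dirichletEigenvalue (n : ℕ) : 1 ≤ dirichletEigenvalue n := by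
  have hn : (1 : ℝ) ≤ (n : ℝ) + 1 := by linarith [n.cast_nonneg (α := ℝ)]
  have hπ : (1 : ℝ) ≤ Real.pi := by linarith [Real.pi_gt_three]
  exact one_le_pow₀ (one_le_mul_of_one_le_of_one_le hn hπ)

lemma dirichletEigenvalue_pos (n : ℕ) : 0 < dirichletEigenvalue n :=
  one_pos.trans_le (one_le_dirichletEigenvalue n)

lemma dirichletEigenvalue_rpow_nonneg (n : ℕ) (p : ℝ) : 0 ≤ dirichletEigenvalue n ^ p :=
  Real.rpow_nonneg (dirichletEigenvalue_pos n).le p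

lemma dirichletEigenvalue_rpow_two_mul (n : ℕ) (r : ℝ) :
    dirichletEigenvalue n ^ (2 * r) = (((n : ℝ) + 1) * Real.pi) ^ (4 * r) := by
  rw [dirichletEigenvalue, ← Real.rpow_natCast, ← Real.rpow_mul (by positivity)]
  congr 1
  push_cast
  ring

lemma memLp_dirichletEigenfunction (n : ℕ) :
    MemLp (fun x : ℝ => √2 * Real.sin (((n : ℝ) + 1) * Real.pi * x)) 2 μ01 := by
  refine MemLp.of_bound (Continuous.aestronglyMeasurable (by fun_prop)) √2 (.of_forall fun x => ?_)
  rw [norm_mul, Real.norm_of_nonneg (Real.sqrt_nonneg 2)]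
  exact mul_le_of_le_one_right (Real.sqrt_nonneg 2) (Real.abs_sin_le_one _)

/-- The eigenfunction of `−d²/dx²` for `dirichletEigenvalue n`, normalised in `L²(0,1)`. -/
def dirichletEigenfunction (n : ℕ) : Hsp := (memLp_dirichletEigenfunction n).toLp _

lemma coeFn_dirichletEigenfunction (n : ℕ) :
    ∀ᵐ x ∂μ01, dirichletEigenfunction n x = √2 * Real.sin (((n : ℝ) + 1) * Real.pi * x) :=
  (memLp_dirichletEigenfunction n).coeFn_toLp

lemma inner_dirichletEigenfunction (n : ℕ) (v : Hsp) :
    inner ℝ (dirichletEigenfunction n) v = √2 * sinCoeff v n := by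
  rw [L2.inner_def, sinCoeff, intervalIntegral_zero_one_eq_integral_μ01, ← integral_const_mul]
  refine integral_congr_ae ?_
  filter_upwards [coeFn_dirichletEigenfunction n] with x hx
  simp only [hx, RCLike.inner_apply, conj_trivial]
  ring

lemma orthonormal_dirichletEigenfunction : Orthonormal ℝ dirichletEigenfunction := by
  refine orthonormal_iff_ite.2 fun m n => ?_
  have hcoeff : sinCoeff (dirichletEigenfunction n) m = √2 * if m = n then 1 / 2 else 0 := by
    rw [← integral_sin_mul_sin m n, sinCoeff, intervalIntegral_zero_one_eq_integral_μ01,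
      intervalIntegral_zero_one_eq_integral_μ01, ← integral_const_mul]
    refine integral_congr_ae ?_
    filter_upwards [coeFn_dirichletEigenfunction n] with x hx
    rw [hx]
    ring
  rw [inner_dirichletEigenfunction, hcoeff, ← mul_assoc, Real.mul_self_sqrt zero_le_two]
  split_ifs <;> norm_num

/-- `sinCoeff · n` as a continuous linear functional on `L²(0,1)`. -/
def sinCoeffCLM (n : ℕ) : Hsp →L[ℝ] ℝ := (√2)⁻¹ • innerSL ℝ (dirichletEigenfunction n)

lemma sinCoeffCLM_apply (n : ℕ) (v : Hsp) : sinCoeffCLM n v = sinCoeff v n := by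
  simp [sinCoeffCLM, inner_dirichletEigenfunction]

lemma sinCoeff_add (v w : Hsp) (n : ℕ) : sinCoeff (v + w) n = sinCoeff v n + sinCoeff w n := by
  simp only [← sinCoeffCLM_apply, map_add]

lemma sinCoeff_sub (v w : Hsp) (n : ℕ) : sinCoeff (v - w) n = sinCoeff v n - sinCoeff w n := by
  simp only [← sinCoeffCLM_apply, map_sub]

lemma tsum_sinCoeff_sq_le (v : Hsp) :
    ∑' n, ENNReal.ofReal (sinCoeff v n ^ 2) ≤ ENNReal.ofReal (‖v‖ ^ 2) := by
  have hsummable := orthonormal_dirichletEigenfunction.inner_products_summable (𝕜 := ℝ) v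
  have hle (n : ℕ) : sinCoeff v n ^ 2 ≤ ‖inner ℝ (dirichletEigenfunction n) v‖ ^ 2 := by
    rw [inner_dirichletEigenfunction, norm_mul, mul_pow, Real.norm_eq_abs, Real.norm_eq_abs,
      sq_abs, sq_abs, Real.sq_sqrt zero_le_two]
    linarith [sq_nonneg (sinCoeff v n)]
  calc ∑' n, ENNReal.ofReal (sinCoeff v n ^ 2)
      ≤ ∑' n, ENNReal.ofReal (‖inner ℝ (dirichletEigenfunction n) v‖ ^ 2) :=
        ENNReal.tsum_le_tsum fun n => ENNReal.ofReal_le_ofReal (hle n)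
    _ = ENNReal.ofReal (∑' n, ‖inner ℝ (dirichletEigenfunction n) v‖ ^ 2) :=
        (ENNReal.ofReal_tsum_of_nonneg (fun n => by positivity) hsummable).symm
    _ ≤ ENNReal.ofReal (‖v‖ ^ 2) :=
        ENNReal.ofReal_le_ofReal (orthonormal_dirichletEigenfunction.tsum_inner_products_le v)

/- The derivative `g` exists only on the open interval; its extension `g (1/2) + ∫ w` is absolutely
continuous on `[0,1]`, which is what integrating by parts twice needs. -/
lemma InDomainA.integral_mul_eq_integral_mul_deriv_deriv {v w : Hsp} (h : InDomainA v w)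
    {φ : ℝ → ℝ} (hφ : ContDiff ℝ 2 φ) (hφ0 : φ 0 = 0) (hφ1 : φ 1 = 0) :
    ∫ x in (0 : ℝ)..1, w x * φ x = ∫ x in (0 : ℝ)..1, v x * deriv (deriv φ) x := by
  obtain ⟨vt, hvt, hvt0, hvt1, hv, g, hg, hgw⟩ := h
  have hφ' : ContDiff ℝ 1 (deriv φ) := hφ.deriv'
  have hw : IntervalIntegrable w volume 0 1 := by
    rw [intervalIntegrable_iff_integrableOn_Ioo_of_le zero_le_one]
    exact (Lp.memLp w).integrable one_le_two
  have hhalf : (1 / 2 : ℝ) ∈ Ioo (0 : ℝ) 1 := by norm_num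
  have hhalf' : (1 / 2 : ℝ) ∈ uIcc (0 : ℝ) 1 := by
    rw [uIcc_of_le zero_le_one]
    exact Ioo_subset_Icc_self hhalf
  set G : ℝ → ℝ := fun x => g (1 / 2) + ∫ z in (1 / 2 : ℝ)..x, w z
  have hG_ac : AbsolutelyContinuousOnInterval G 0 1 :=
    (contDiff_const.contDiffOn.absolutelyContinuousOnInterval).add
      (hw.absolutelyContinuousOnInterval_intervalIntegral hhalf')
  have hG_deriv : ∀ᵐ x, x ∈ uIoc (0 : ℝ) 1 → deriv G x * φ x = w x * φ x := by
    filter_upwards [hw.ae_hasDerivAt_integral] with x hx hx01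
    rw [((hx (uIoc_subset_uIcc hx01) _ hhalf').const_add (g (1 / 2))).deriv]
  have hvt_deriv : ∀ x ∈ Ioo (0 : ℝ) 1, HasDerivAt vt (G x) x := fun x hx => by
    have hGx : G x = g x := (eq_add_of_sub_eq' (hgw x hx _ hhalf)).symm
    exact hGx ▸ hg x hx
  have hparts_vt : ∫ x in (0 : ℝ)..1, vt x * deriv (deriv φ) x =
      vt 1 * deriv φ 1 - vt 0 * deriv φ 0 - ∫ x in (0 : ℝ)..1, G x * deriv φ x :=
    intervalIntegral.integral_mul_deriv_eq_deriv_mul_of_hasDerivAt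
      (by rwa [uIcc_of_le zero_le_one]) hφ'.continuous.continuousOn
      (by simpa using hvt_deriv)
      (fun x _ => (hφ'.differentiable one_ne_zero x).hasDerivAt)
      hG_ac.continuousOn.intervalIntegrable
      ((hφ'.continuous_deriv le_rfl).intervalIntegrable _ _)
  have hparts_G := hG_ac.integral_mul_deriv_eq_deriv_mul
    (hφ.of_le one_le_two).contDiffOn.absolutelyContinuousOnInterval
  calc ∫ x in (0 : ℝ)..1, w x * φ x = ∫ x in (0 : ℝ)..1, deriv G x * φ x :=
        (intervalIntegral.integral_congr_ae hG_deriv).symm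
    _ = ∫ x in (0 : ℝ)..1, vt x * deriv (deriv φ) x := by
        rw [hparts_vt, hparts_G, hφ0, hφ1, hvt0, hvt1]
        ring
    _ = ∫ x in (0 : ℝ)..1, v x * deriv (deriv φ) x := by
        simp only [intervalIntegral_zero_one_eq_integral_μ01]
        exact integral_congr_ae (hv.mono fun x hx => by simp only [hx])

lemma InDomainA.sinCoeff_eq {v w : Hsp} (h : InDomainA v w) (n : ℕ) :
    sinCoeff w n = -(dirichletEigenvalue n * sinCoeff v n) := by
  set k : ℝ := ((n : ℝ) + 1) * Real.pi with hk
  have hlin (x : ℝ) : HasDerivAt (fun x => k * x) k x := hasDerivAt_const_mul k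
  have hderiv : deriv (fun x => Real.sin (k * x)) = fun x => k * Real.cos (k * x) :=
    funext fun x => by rw [(hlin x).sin.deriv, mul_comm]
  have hderiv2 : deriv (deriv fun x => Real.sin (k * x)) = fun x => -(k ^ 2 * Real.sin (k * x)) :=
    funext fun x => by
      rw [hderiv, ((hlin x).cos.const_mul k).deriv]
      ring
  have hsin : Real.sin (k * 1) = 0 := by
    simpa [hk] using Real.sin_nat_mul_pi (n + 1)
  have hgreen := h.integral_mul_eq_integral_mul_deriv_deriv (φ := fun x => Real.sin (k * x))
    (by fun_prop) (by simp) hsin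
  rw [hderiv2] at hgreen
  simp only [sinCoeff, ← hk, hgreen, dirichletEigenvalue]
  rw [← intervalIntegral.integral_const_mul, ← intervalIntegral.integral_neg]
  exact intervalIntegral.integral_congr fun x _ => by ring

end DirichletLaplacian

section FractionalPowerSpaces

/-- The square `∑ₙ λₙ^(2r) (sinCoeff v n)²` of the norm of `v` in `V^{2r} = D(A^r)`, equal to `∞`
when `v` is not in that space; it turns `V2rDistSq` into a distance coming from a norm. -/
def V2rNormSq (r : ℝ) (v : Hsp) : ℝ≥0∞ :=
  ∑' n, ENNReal.ofReal (dirichletEigenvalue n ^ (2 * r) * sinCoeff v n ^ 2)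

lemma V2rDistSq_eq_V2rNormSq_sub (r : ℝ) (v w : Hsp) : V2rDistSq r v w = V2rNormSq r (v - w) := by
  simp only [V2rDistSq, V2rNormSq, dirichletEigenvalue_rpow_two_mul]

lemma memV2r_iff_V2rNormSq_ne_top {r : ℝ} {v : Hsp} : MemV2r r v ↔ V2rNormSq r v ≠ ∞ := by
  have hnonneg (n : ℕ) : 0 ≤ dirichletEigenvalue n ^ (2 * r) * sinCoeff v n ^ 2 :=
    mul_nonneg (dirichletEigenvalue_rpow_nonneg n _) (sq_nonneg _)
  simp only [MemV2r, ← dirichletEigenvalue_rpow_two_mul]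
  refine ⟨Summable.tsum_ofReal_ne_top, fun h => ?_⟩
  exact (ENNReal.summable_toReal h).congr fun n => ENNReal.toReal_ofReal (hnonneg n)

lemma V2rNormSq_mono {r q : ℝ} (hrq : r ≤ q) (v : Hsp) : V2rNormSq r v ≤ V2rNormSq q v := by
  refine ENNReal.tsum_le_tsum fun n => ENNReal.ofReal_le_ofReal ?_
  gcongr
  exact one_le_dirichletEigenvalue n

lemma V2rNormSq_zero_le (v : Hsp) : V2rNormSq 0 v ≤ ENNReal.ofReal (‖v‖ ^ 2) := by
  simpa [V2rNormSq] using tsum_sinCoeff_sq_le v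

lemma V2rNormSq_sub_le (r : ℝ) (v w : Hsp) :
    V2rNormSq r (v - w) ≤ 2 * (V2rNormSq r v + V2rNormSq r w) := by
  simp only [V2rNormSq]
  rw [← ENNReal.tsum_add, ← ENNReal.tsum_mul_left]
  refine ENNReal.tsum_le_tsum fun n => ?_
  have hweight := dirichletEigenvalue_rpow_nonneg n (2 * r)
  have hle : dirichletEigenvalue n ^ (2 * r) * sinCoeff (v - w) n ^ 2 ≤
      2 * (dirichletEigenvalue n ^ (2 * r) * sinCoeff v n ^ 2 +
        dirichletEigenvalue n ^ (2 * r) * sinCoeff w n ^ 2) := by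
    rw [← mul_add, mul_left_comm, sinCoeff_sub]
    gcongr
    linarith [sq_nonneg (sinCoeff v n + sinCoeff w n)]
  refine (ENNReal.ofReal_le_ofReal hle).trans_eq ?_
  rw [ENNReal.ofReal_mul zero_le_two, ENNReal.ofReal_add (by positivity) (by positivity),
    ENNReal.ofReal_ofNat]

lemma V2rNormSq_interpolation {θ η : ℝ} (hθ : 0 ≤ θ) (hη : 0 ≤ η) (hθη : θ + η = 1) (p q : ℝ)
    (v : Hsp) : V2rNormSq (θ * p + η * q) v ≤ V2rNormSq p v ^ θ * V2rNormSq q v ^ η := by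
  have hterm (n : ℕ) :
      ENNReal.ofReal (dirichletEigenvalue n ^ (2 * (θ * p + η * q)) * sinCoeff v n ^ 2) =
        ENNReal.ofReal (dirichletEigenvalue n ^ (2 * p) * sinCoeff v n ^ 2) ^ θ *
          ENNReal.ofReal (dirichletEigenvalue n ^ (2 * q) * sinCoeff v n ^ 2) ^ η := by
    have hl := dirichletEigenvalue_pos n
    have hexp : 2 * (θ * p + η * q) = 2 * p * θ + 2 * q * η := by ring
    rw [ENNReal.ofReal_rpow_of_nonneg (by positivity) hθ,
      ENNReal.ofReal_rpow_of_nonneg (by positivity) hη, ← ENNReal.ofReal_mul (by positivity),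
      Real.mul_rpow (by positivity) (by positivity), Real.mul_rpow (by positivity) (by positivity),
      mul_mul_mul_comm, ← Real.rpow_mul hl.le, ← Real.rpow_mul hl.le, ← Real.rpow_add hl,
      ← Real.rpow_add_of_nonneg (by positivity) hθ hη, hθη, Real.rpow_one, hexp]
  simp only [V2rNormSq, hterm, ← lintegral_count]
  exact ENNReal.lintegral_mul_norm_pow_le (measurable_of_countable _).aemeasurable
    (measurable_of_countable _).aemeasurable hθ hη hθη

lemma tendsto_V2rDistSq_of_V2rNormSq_le {ι : Type*} {l : Filter ι} {r q : ℝ} (hr : 0 ≤ r)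
    (hrq : r < q) {f : ι → Hsp} {a : Hsp} (hlim : Tendsto f l (𝓝 a)) {M : ℝ≥0}
    (hf : ∀ i, V2rNormSq q (f i) ≤ M) (ha : V2rNormSq q a ≤ M) :
    Tendsto (fun i => V2rDistSq r (f i) a) l (𝓝 0) := by
  have hq : 0 < q := hr.trans_lt hrq
  set η : ℝ := r / q with hη
  have hη0 : 0 ≤ η := by positivity
  have hη1 : 0 < 1 - η := sub_pos.2 ((div_lt_one hq).2 hrq)
  have hbound (i : ι) : V2rDistSq r (f i) a ≤
      ENNReal.ofReal (‖f i - a‖ ^ 2) ^ (1 - η) * (2 * (M + M) : ℝ≥0∞) ^ η :=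
    calc V2rDistSq r (f i) a = V2rNormSq ((1 - η) * 0 + η * q) (f i - a) := by
          rw [V2rDistSq_eq_V2rNormSq_sub, mul_zero, zero_add, hη, div_mul_cancel₀ _ hq.ne']
      _ ≤ V2rNormSq 0 (f i - a) ^ (1 - η) * V2rNormSq q (f i - a) ^ η :=
          V2rNormSq_interpolation hη1.le hη0 (sub_add_cancel 1 η) 0 q _
      _ ≤ _ := by
          gcongr
          · exact V2rNormSq_zero_le _
          · exact (V2rNormSq_sub_le q _ _).trans (by gcongr; exact hf i)
  have hnorm : Tendsto (fun i => ENNReal.ofReal (‖f i - a‖ ^ 2)) l (𝓝 0) := by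
    simpa using ENNReal.tendsto_ofReal ((tendsto_iff_norm_sub_tendsto_zero.1 hlim).pow 2)
  have hconst : (2 * (M + M) : ℝ≥0∞) ^ η ≠ ∞ :=
    ENNReal.rpow_ne_top_of_nonneg hη0 (by finiteness)
  refine tendsto_of_tendsto_of_tendsto_of_le_of_le tendsto_const_nhds ?_ (fun _ => zero_le) hbound
  simpa [hη1] using ENNReal.Tendsto.mul_const (hnorm.ennrpow_const (1 - η)) (.inr hconst)

end FractionalPowerSpaces

section SmoothingEffect

lemma abs_le_one_of_mem_heaviside {s h : ℝ} (hh : h ∈ heaviside s) : |h| ≤ 1 := by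
  unfold heaviside at hh
  split_ifs at hh
  · simp [mem_singleton_iff.1 hh]
  · exact abs_le.2 hh
  · simp [mem_singleton_iff.1 hh]

lemma norm_le_of_heaviside_selection {b ω : ℝ} {u r : Hsp}
    (h : ∀ᵐ x ∂μ01, ∃ h ∈ heaviside (u x), r x = b * h + ω * u x) :
    ‖r‖ ≤ |b| + |ω| * ‖u‖ := by
  have hsel : ∀ᵐ x ∂μ01, ‖(r - ω • u : Hsp) x‖ ≤ |b| := by
    filter_upwards [h, Lp.coeFn_sub r (ω • u), Lp.coeFn_smul ω u] with x ⟨s, hs, hrx⟩ hsub hsmul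
    rw [hsub, Pi.sub_apply, hsmul, Pi.smul_apply, hrx, smul_eq_mul, add_sub_cancel_right,
      Real.norm_eq_abs, abs_mul]
    exact mul_le_of_le_one_right (abs_nonneg b) (abs_le_one_of_mem_heaviside hs)
  calc ‖r‖ = ‖(r - ω • u) + ω • u‖ := by rw [sub_add_cancel]
    _ ≤ ‖r - ω • u‖ + ‖ω • u‖ := norm_add_le _ _
    _ ≤ |b| + |ω| * ‖u‖ := by
        rw [norm_smul, Real.norm_eq_abs]
        gcongr
        simpa [measureUnivNNReal] using Lp.norm_le_of_ae_bound (abs_nonneg b) hsel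

namespace IsStrongSolutionWith

variable {b ω : ℝ → ℝ} {τ T₁ T₂ : ℝ} {u r u' uxx : ℝ → Hsp}

lemma ae_norm_selection_le (H : IsStrongSolutionWith b ω τ u r u' uxx) :
    ∀ᵐ t, τ < t → ‖r t‖ ≤ |b t| + |ω t| * ‖u t‖ :=
  ((ae_restrict_iff' measurableSet_Ioi).1 H.sel).mono fun _ hsel ht =>
    norm_le_of_heaviside_selection (hsel ht)

lemma aemeasurable_sinCoeff_selection (H : IsStrongSolutionWith b ω τ u r u' uxx) (hτ : τ < T₁)
    (hT : T₁ < T₂) (n : ℕ) :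
    AEMeasurable (fun t => sinCoeff (r t) n) (volume.restrict (Ioo T₁ T₂)) := by
  have hr := (H.rmem T₂ (hτ.trans hT)).aestronglyMeasurable.mono_measure
    (Measure.restrict_mono (Ioo_subset_Ioo_left hτ.le) le_rfl)
  simpa only [sinCoeffCLM_apply] using
    ((sinCoeffCLM n).continuous.comp_aestronglyMeasurable hr).aemeasurable

lemma intervalIntegrable_sinCoeff_deriv (H : IsStrongSolutionWith b ω τ u r u' uxx) (hτ : τ < T₁)
    (hT : T₁ < T₂) (n : ℕ) : IntervalIntegrable (fun t => sinCoeff (u' t) n) volume T₁ T₂ := by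
  have hu' := (H.fund T₁ T₂ hτ hT).1
  simp only [← sinCoeffCLM_apply]
  exact ⟨(sinCoeffCLM n).integrable_comp hu'.1, (sinCoeffCLM n).integrable_comp hu'.2⟩

lemma sinCoeff_eq_add_integral (H : IsStrongSolutionWith b ω τ u r u' uxx) (hτ : τ < T₁)
    (hT : T₁ < T₂) (n : ℕ) {t : ℝ} (ht : t ∈ Icc T₁ T₂) :
    sinCoeff (u t) n = sinCoeff (u T₁) n + ∫ s in T₁..t, sinCoeff (u' s) n := by
  obtain ⟨hint, hfund⟩ := H.fund T₁ T₂ hτ hT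
  have hint_t : IntervalIntegrable u' volume T₁ t := hint.mono_set <| by
    rw [uIcc_of_le ht.1, uIcc_of_le hT.le]
    exact Icc_subset_Icc_right ht.2
  rw [hfund t ht, sinCoeff_add, ← sinCoeffCLM_apply n (∫ s in T₁..t, u' s),
    ← (sinCoeffCLM n).intervalIntegral_comp_comm hint_t]
  simp only [sinCoeffCLM_apply]

lemma ae_sinCoeff_deriv_eq (H : IsStrongSolutionWith b ω τ u r u' uxx) (n : ℕ) :
    ∀ᵐ t, τ < t → sinCoeff (u' t) n =
      sinCoeff (r t) n - dirichletEigenvalue n * sinCoeff (u t) n := by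
  filter_upwards [(ae_restrict_iff' measurableSet_Ioi).1 H.dom,
    (ae_restrict_iff' measurableSet_Ioi).1 H.eq] with t hdom heq ht
  rw [heq ht, sinCoeff_add, (hdom ht).sinCoeff_eq, sub_eq_add_neg]

lemma sinCoeff_sq_le (H : IsStrongSolutionWith b ω τ u r u' uxx) (hτ : τ < T₁) (hT : T₁ < T₂)
    (n : ℕ) :
    ENNReal.ofReal (sinCoeff (u T₂) n ^ 2) ≤
      ENNReal.ofReal (Real.exp (-(dirichletEigenvalue n * (T₂ - T₁))) * sinCoeff (u T₁) n ^ 2) +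
        ∫⁻ t in Ioo T₁ T₂, ENNReal.ofReal (Real.exp (-(dirichletEigenvalue n * (T₂ - t))) *
          ((dirichletEigenvalue n)⁻¹ * sinCoeff (r t) n ^ 2)) := by
  set c : ℝ → ℝ := fun t => sinCoeff (u T₁) n + ∫ s in T₁..t, sinCoeff (u' s) n
  have hc (t : ℝ) (ht : t ∈ Icc T₁ T₂) : sinCoeff (u t) n = c t :=
    H.sinCoeff_eq_add_integral hτ hT n ht
  have hint := H.intervalIntegrable_sinCoeff_deriv hτ hT n
  have hc_ac : AbsolutelyContinuousOnInterval c T₁ T₂ :=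
    contDiff_const.contDiffOn.absolutelyContinuousOnInterval.add
      (hint.absolutelyContinuousOnInterval_intervalIntegral left_mem_uIcc)
  have hc_deriv : ∀ᵐ t, t ∈ Ioo T₁ T₂ →
      HasDerivAt c (sinCoeff (r t) n - dirichletEigenvalue n * c t) t := by
    filter_upwards [hint.ae_hasDerivAt_integral, H.ae_sinCoeff_deriv_eq n] with t hderiv heq ht
    have ht' := Ioo_subset_Icc_self ht
    rw [← hc t ht', ← heq (hτ.trans ht.1)]
    exact (hderiv (Icc_subset_uIcc ht') T₁ left_mem_uIcc).const_add _
  rw [hc T₁ (left_mem_Icc.2 hT.le), hc T₂ (right_mem_Icc.2 hT.le)]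
  exact sq_le_of_ae_hasDerivAt_sub_mul hT.le (dirichletEigenvalue_pos n) hc_ac hc_deriv

lemma weighted_sinCoeff_sq_le (H : IsStrongSolutionWith b ω τ u r u' uxx) (hτ : τ < T₁)
    (hT : T₁ < T₂) {q : ℝ} (hq : 1 / 2 ≤ q) (n : ℕ) :
    ENNReal.ofReal (dirichletEigenvalue n ^ (2 * q) * sinCoeff (u T₂) n ^ 2) ≤
      ENNReal.ofReal ((2 * q / (T₂ - T₁)) ^ (2 * q)) * ENNReal.ofReal (sinCoeff (u T₁) n ^ 2) +
        ∫⁻ t in Ioo T₁ T₂, ENNReal.ofReal (((2 * q - 1) / (T₂ - t)) ^ (2 * q - 1)) *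
          ENNReal.ofReal (sinCoeff (r t) n ^ 2) := by
  have hl := dirichletEigenvalue_pos n
  set l := dirichletEigenvalue n
  have hinitial : l ^ (2 * q) * Real.exp (-(l * (T₂ - T₁))) ≤ (2 * q / (T₂ - T₁)) ^ (2 * q) :=
    rpow_mul_exp_neg_mul_le hl.le (sub_pos.2 hT) (by linarith)
  have hkernel (t : ℝ) (ht : t ∈ Ioo T₁ T₂) :
      l ^ (2 * q) * (Real.exp (-(l * (T₂ - t))) * l⁻¹) ≤
        ((2 * q - 1) / (T₂ - t)) ^ (2 * q - 1) :=
    calc l ^ (2 * q) * (Real.exp (-(l * (T₂ - t))) * l⁻¹)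
        = l ^ (2 * q - 1) * Real.exp (-(l * (T₂ - t))) := by
          rw [Real.rpow_sub_one hl.ne']
          ring
      _ ≤ ((2 * q - 1) / (T₂ - t)) ^ (2 * q - 1) :=
          rpow_mul_exp_neg_mul_le hl.le (sub_pos.2 ht.2) (by linarith)
  have hweight : 0 ≤ l ^ (2 * q) := by positivity
  rw [ENNReal.ofReal_mul hweight]
  refine (mul_le_mul_right (H.sinCoeff_sq_le hτ hT n) _).trans ?_
  rw [mul_add, ← ENNReal.ofReal_mul hweight, ← mul_assoc,
    ← lintegral_const_mul' _ _ ENNReal.ofReal_ne_top]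
  refine add_le_add ?_ (setLIntegral_mono' measurableSet_Ioo fun t ht => ?_)
  · rw [ENNReal.ofReal_mul (by positivity)]
    gcongr
  · rw [← ENNReal.ofReal_mul hweight, ← mul_assoc, ← mul_assoc, mul_assoc (l ^ (2 * q)),
      ENNReal.ofReal_mul (by positivity)]
    gcongr
    exact hkernel t ht

lemma V2rNormSq_le (H : IsStrongSolutionWith b ω τ u r u' uxx) (hτ : τ < T₁) (hT : T₁ < T₂)
    {q : ℝ} (hq : 1 / 2 ≤ q) :
    V2rNormSq q (u T₂) ≤
      ENNReal.ofReal ((2 * q / (T₂ - T₁)) ^ (2 * q)) * ENNReal.ofReal (‖u T₁‖ ^ 2) +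
        ∫⁻ t in Ioo T₁ T₂, ENNReal.ofReal (((2 * q - 1) / (T₂ - t)) ^ (2 * q - 1)) *
          ENNReal.ofReal (‖r t‖ ^ 2) := by
  refine (ENNReal.tsum_le_tsum fun n => H.weighted_sinCoeff_sq_le hτ hT hq n).trans ?_
  have hmeas (n : ℕ) : AEMeasurable (fun t =>
      ENNReal.ofReal (((2 * q - 1) / (T₂ - t)) ^ (2 * q - 1)) *
        ENNReal.ofReal (sinCoeff (r t) n ^ 2)) (volume.restrict (Ioo T₁ T₂)) :=
    (Measurable.aemeasurable (by fun_prop)).mul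
      ((H.aemeasurable_sinCoeff_selection hτ hT n).pow_const 2).ennreal_ofReal
  rw [ENNReal.tsum_add, ENNReal.tsum_mul_left, ← lintegral_tsum hmeas]
  simp only [ENNReal.tsum_mul_left]
  gcongr <;> exact tsum_sinCoeff_sq_le _

end IsStrongSolutionWith

lemma exists_V2rNormSq_le_of_invariant {b ω : ℝ} {S : Set Hsp} (hS : Bornology.IsBounded S)
    (hinv : ∀ t, 0 ≤ t → autG b ω t S = S) {q : ℝ} (hq : q < 1) :
    ∃ M : ℝ≥0, ∀ v ∈ S, V2rNormSq q v ≤ M := by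
  obtain ⟨R, hR⟩ := hS.exists_norm_le
  set p : ℝ := max q (1 / 2)
  have hp : 1 / 2 ≤ p := le_max_right _ _
  have hp1 : p < 1 := max_lt hq (by norm_num)
  set κ : ℝ → ℝ≥0∞ := fun t => ENNReal.ofReal (((2 * p - 1) / (2 - t)) ^ (2 * p - 1))
  set K : ℝ := |b| + |ω| * R
  set B : ℝ≥0∞ := ENNReal.ofReal ((2 * p / (2 - 1)) ^ (2 * p)) * ENNReal.ofReal (R ^ 2) +
    ∫⁻ t in Ioo 1 2, κ t * ENNReal.ofReal (K ^ 2) with hB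
  have hB_finite : B ≠ ∞ := by
    have hκ : ∫⁻ t in Ioo 1 2, κ t ≠ ∞ :=
      lintegral_div_sub_rpow_ne_top (by linarith) (by linarith) 1 2
    rw [hB, lintegral_mul_const' _ _ ENNReal.ofReal_ne_top]
    finiteness
  refine ⟨B.toNNReal, fun v hv => (V2rNormSq_mono (le_max_left q (1 / 2)) v).trans ?_⟩
  rw [ENNReal.coe_toNNReal hB_finite]
  rw [← hinv 2 zero_le_two] at hv
  obtain ⟨u, hu0, hu, rfl⟩ := hv
  have hu_norm (t : ℝ) (ht : 0 ≤ t) : ‖u t‖ ≤ R := hR _ (hinv t ht ▸ ⟨u, hu0, hu, rfl⟩)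
  obtain ⟨r, u', uxx, H⟩ := hu
  refine (H.V2rNormSq_le one_pos one_lt_two hp).trans ?_
  have hr_norm : ∀ᵐ t ∂volume.restrict (Ioo 1 2), ‖r t‖ ≤ K := by
    refine (ae_restrict_iff' measurableSet_Ioo).2 (H.ae_norm_selection_le.mono fun t hsel ht => ?_)
    have ht0 : 0 < t := one_pos.trans ht.1
    exact (hsel ht0).trans <|
      add_le_add_right (mul_le_mul_of_nonneg_left (hu_norm t ht0.le) (abs_nonneg ω)) _
  have hu₁ : ‖u 1‖ ≤ R := hu_norm 1 zero_le_one
  refine add_le_add (by gcongr) (lintegral_mono_ae (hr_norm.mono fun t ht => ?_))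
  dsimp only [κ]
  gcongr

end SmoothingEffect

theorem statement8_general (b ω : ℝ) {𝒜 : Set Hsp} (hcompact : IsCompact 𝒜)
    (hinv : ∀ t : ℝ, 0 ≤ t → autG b ω t 𝒜 = 𝒜) :
    ∀ r : ℝ, 0 ≤ r → r < 1 →
      (∀ v ∈ 𝒜, MemV2r r v) ∧
      (∃ M : ℝ, ∀ v ∈ 𝒜, V2rDistSq r v 0 ≤ ENNReal.ofReal M) ∧
      ∀ f : ℕ → Hsp, (∀ n, f n ∈ 𝒜) →
        ∃ a ∈ 𝒜, ∃ φ : ℕ → ℕ, StrictMono φ ∧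
          Tendsto (fun n => V2rDistSq r (f (φ n)) a) atTop (𝓝 0) := by
  intro r hr hr1
  obtain ⟨q, hrq, hq1⟩ := exists_between hr1
  obtain ⟨M, hM⟩ := exists_V2rNormSq_le_of_invariant hcompact.isBounded hinv hq1
  have hMr (v : Hsp) (hv : v ∈ 𝒜) : V2rNormSq r v ≤ M := (V2rNormSq_mono hrq.le v).trans (hM v hv)
  refine ⟨fun v hv => memV2r_iff_V2rNormSq_ne_top.2 (ne_top_of_le_ne_top ENNReal.coe_ne_top
    (hMr v hv)), ⟨M, fun v hv => ?_⟩, fun f hf => ?_⟩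
  · simpa [V2rDistSq_eq_V2rNormSq_sub] using hMr v hv
  · obtain ⟨a, ha, φ, hφ, hlim⟩ := hcompact.tendsto_subseq hf
    exact ⟨a, ha, φ, hφ, tendsto_V2rDistSq_of_V2rNormSq_le hr hrq hlim
      (fun n => hM _ (hf (φ n))) (hM a ha)⟩

/-- in the autonomous case with `ω < π²`, the global attractor is
compact in `V^{2r}` for every `0 ≤ r < 1`: it is contained and bounded in
`V^{2r}` and sequentially compact with respect to the `V^{2r}` distance. -/
theorem statement8
    (b ω : ℝ) (hb : 0 < b) (hω : 0 ≤ ω) (hωπ : ω < Real.pi ^ 2)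
    (𝒜 : Set Hsp) (hattr : IsGlobalAttractor b ω 𝒜) :
    ∀ r : ℝ, 0 ≤ r → r < 1 →
      (∀ v ∈ 𝒜, MemV2r r v) ∧
      (∃ M : ℝ, ∀ v ∈ 𝒜, V2rDistSq r v 0 ≤ ENNReal.ofReal M) ∧
      ∀ f : ℕ → Hsp, (∀ n, f n ∈ 𝒜) →
        ∃ a ∈ 𝒜, ∃ φ : ℕ → ℕ, StrictMono φ ∧
          Filter.Tendsto (fun n => V2rDistSq r (f (φ n)) a) Filter.atTop (nhds 0) :=
  statement8_general b ω hattr.compact hattr.invariant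

end
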